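/- For every real number α with 1 < α < 2, p_{o(n²)} < p₁·p₂⋯p_{n+1} in the following precise sense: there exists a positive integer N such that for all n > N, p_{n + 1 + ⌊n^α⌋} < p₁·p₂⋯p_{n+1}, where p_k denotes the k-th prime (p₁ = 2). -/

import Mathlib

/-!
Only crude bounds are needed. Every prime is at least `2`, so the product of the first `n + 1`
primes is at least `2 ^ (n + 1)`. Chebyshev's lower bound for `π` at `2 ^ n` gives
`n * π (2 ^ n) ≥ 2 ^ n - (n + 1)`, which exceeds `n * (n + n ^ 2)` for `n ≥ 11`. Since
`n + ⌊n ^ α⌋ ≤ n + n ^ 2` for `α < 2`, the prime in question is at most `2 ^ n`.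
-/

open Finset

lemma cubic_lt_two_pow (n : ℕ) (hn : 11 ≤ n) : n ^ 3 + n ^ 2 + n + 1 < 2 ^ n := by
  induction n, hn using Nat.le_induction with
  | base => norm_num
  | succ k hk ih =>
    rw [pow_succ 2 k]
    nlinarith [Nat.mul_le_mul hk (Nat.le_refl (k ^ 2)), Nat.mul_le_mul hk (Nat.le_refl k)]

/-- Chebyshev's lower bound `π(x) ≥ (x log 2 - log (x + 1)) / log x` at `x = 2 ^ n`, with
`log (2 ^ n + 1)` replaced by `(n + 1) log 2` and denominators cleared. -/
lemma two_pow_le_mul_primeCounting (n : ℕ) (hn : 1 ≤ n) :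
    2 ^ n ≤ n * Nat.primeCounting (2 ^ n) + (n + 1) := by
  have h := Chebyshev.pi_ge (2 ^ n)
  have hl : 0 < Real.log 2 := Real.log_pos (by norm_num)
  have hn' : (0 : ℝ) < n := by exact_mod_cast hn
  push_cast at h
  rw [Real.log_pow, div_le_iff₀ (by positivity)] at h
  have h1 : Real.log ((2 : ℝ) ^ n + 1) ≤ (n + 1) * Real.log 2 := by
    have h2 : Real.log ((2 : ℝ) ^ n + 1) ≤ Real.log ((2 : ℝ) ^ (n + 1)) := by
      apply Real.log_le_log (by positivity)
      have : (1 : ℝ) ≤ 2 ^ n := one_le_pow₀ (by norm_num)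
      rw [pow_succ]
      linarith
    rw [Real.log_pow] at h2
    exact_mod_cast h2
  have h3 : (2 : ℝ) ^ n ≤ n * Nat.primeCounting (2 ^ n) + (n + 1) := by
    refine le_of_mul_le_mul_right ?_ hl
    linarith
  exact_mod_cast h3

lemma nth_prime_le_two_pow (n : ℕ) (hn : 11 ≤ n) :
    Nat.nth Nat.Prime (n + n ^ 2) ≤ 2 ^ n := by
  apply Nat.lt_succ_iff.mp
  apply Nat.nth_lt_of_lt_count
  change n + n ^ 2 < Nat.primeCounting (2 ^ n)
  have h1 := cubic_lt_two_pow n hn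
  have h2 := two_pow_le_mul_primeCounting n (by omega)
  refine Nat.lt_of_mul_lt_mul_left (a := n) ?_
  have : n * (n + n ^ 2) = n ^ 3 + n ^ 2 := by ring
  omega

/-- For every real `α` with `1 < α < 2`, `p_{o(n²)} < p₁·p₂⋯p_{n+1}` in the following
precise sense: there is a positive integer `N` such that for all `n > N`,
`p_{n + 1 + ⌊n^α⌋} < p₁·p₂⋯p_{n+1}`, where `p_k` is the `k`-th prime
(so `p_{k+1} = Nat.nth Nat.Prime k`). -/
theorem stmt_19 (α : ℝ) (hα1 : 1 < α) (hα2 : α < 2) :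
    ∃ N : ℕ, 0 < N ∧ ∀ n : ℕ, N < n →
      Nat.nth Nat.Prime (n + ⌊(n : ℝ) ^ α⌋₊) <
        ∏ i ∈ Finset.range (n + 1), Nat.nth Nat.Prime i := by
  refine ⟨11, by norm_num, fun n hn => ?_⟩
  have hfloor : ⌊(n : ℝ) ^ α⌋₊ ≤ n ^ 2 := by
    apply Nat.floor_le_of_le
    have h1 : (1 : ℝ) ≤ n := by exact_mod_cast (by omega : 1 ≤ n)
    calc (n : ℝ) ^ α ≤ (n : ℝ) ^ (2 : ℝ) := Real.rpow_le_rpow_of_exponent_le h1 hα2.le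
      _ = ((n ^ 2 : ℕ) : ℝ) := by norm_num
  calc Nat.nth Nat.Prime (n + ⌊(n : ℝ) ^ α⌋₊)
      ≤ Nat.nth Nat.Prime (n + n ^ 2) :=
        Nat.nth_monotone Nat.infinite_setOfPred_prime (by omega)
    _ ≤ 2 ^ n := nth_prime_le_two_pow n hn.le
    _ < 2 ^ (n + 1) := Nat.pow_lt_pow_right (by norm_num) (by omega)
    _ = ∏ _i ∈ Finset.range (n + 1), 2 := by simp
    _ ≤ ∏ i ∈ Finset.range (n + 1), Nat.nth Nat.Prime i :=
        Finset.prod_le_prod' fun i _ => (Nat.prime_nth_prime i).two_le
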